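/- Let σ > 0, ρ ∈ (0,1), and let Z₁, Z₂ be independent standard Gaussian random variables; set X_s := σ Z₁ and X_t := σ(ρ Z₁ + √(1−ρ²) Z₂), so that (X_s, X_t) is a centred bivariate Gaussian vector with common variance σ² and correlation ρ. Let h : ℝ → ℝ be strictly increasing and continuous, satisfy condition [A₋] with parameter b₋ > 0, and satisfy h(x)/h(−x) → 0 as x → +∞. Then P(h(X_t) − h(X_s) > y) / P(h(X_t) ≤ −y) → 1 as y → ∞; in particular the right tail of the increment h(X_t) − h(X_s) is regularly varying at infinity with the same index −β₋ = −1/(2 b₋ σ²) as the left tail of the distribution of h(X_t). -/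

import Mathlib

open MeasureTheory ProbabilityTheory Filter Real Set

lemma tendsto_sq_atBot_atTop : Tendsto (fun x : ℝ => x ^ 2) atBot atTop := by
  refine ((tendsto_pow_atTop (α := ℝ) two_ne_zero).comp tendsto_neg_atBot_atTop).congr fun x => ?_
  simp

/-- The standard normal distribution function has derivative the Gaussian density. -/
lemma hasDerivAt_gaussianReal_Iic (x : ℝ) :
    HasDerivAt (fun x => (gaussianReal 0 1).real (Iic x)) (gaussianPDFReal 0 1 x) x := by
  have hint := integrable_gaussianPDFReal 0 1
  have hcont : Continuous (gaussianPDFReal 0 1) := by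
    rw [gaussianPDFReal_def]; fun_prop
  have heq : (fun x => (gaussianReal 0 1).real (Iic x)) =
      fun x => (∫ t in Iic (0 : ℝ), gaussianPDFReal 0 1 t)
        + ∫ t in (0 : ℝ)..x, gaussianPDFReal 0 1 t := by
    funext z
    rw [← intervalIntegral.integral_Iic_sub_Iic hint.integrableOn hint.integrableOn,
      measureReal_def, gaussianReal_apply_eq_integral _ one_ne_zero, ENNReal.toReal_ofReal]
    · ring
    · exact integral_nonneg fun t => gaussianPDFReal_nonneg _ _ _
  rw [heq]
  exact (intervalIntegral.integral_hasDerivAt_right hint.intervalIntegrable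
    (hcont.stronglyMeasurableAtFilter _ _) hcont.continuousAt).const_add _

lemma gaussianPDFReal_zero_one (x : ℝ) :
    gaussianPDFReal 0 1 x = (√(2 * π))⁻¹ * rexp (-x ^ 2 / 2) := by
  simp [gaussianPDFReal_def]

lemma hasDerivAt_gaussianPDFReal_zero_one (x : ℝ) :
    HasDerivAt (gaussianPDFReal 0 1) (-x * gaussianPDFReal 0 1 x) x := by
  have h1 : HasDerivAt (fun x : ℝ => (√(2 * π))⁻¹ * rexp (-x ^ 2 / 2))
      ((√(2 * π))⁻¹ * (rexp (-x ^ 2 / 2) * (-(2 * x) / 2))) x := by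
    have := ((hasDerivAt_pow 2 x).neg.div_const 2).exp.const_mul (√(2 * π))⁻¹
    simpa using this
  have h2 : gaussianPDFReal 0 1 = fun x : ℝ => (√(2 * π))⁻¹ * rexp (-x ^ 2 / 2) := by
    funext x; exact gaussianPDFReal_zero_one x
  rw [h2]
  convert h1 using 1
  ring

lemma tendsto_gaussianPDFReal_atBot : Tendsto (gaussianPDFReal 0 1) atBot (nhds 0) := by
  have h2 : gaussianPDFReal 0 1 = fun x : ℝ => (√(2 * π))⁻¹ * rexp (-x ^ 2 / 2) := by
    funext x; exact gaussianPDFReal_zero_one x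
  have h3 : Tendsto (fun x : ℝ => x ^ 2) atBot atTop :=
    tendsto_sq_atBot_atTop
  have h4 : Tendsto (fun x : ℝ => -x ^ 2 / 2) atBot atBot :=
    (tendsto_neg_atTop_atBot.comp h3).atBot_div_const two_pos
  rw [h2]
  simpa using (tendsto_exp_atBot.comp h4).const_mul (√(2 * π))⁻¹

lemma tendsto_gaussianReal_Iic_atBot :
    Tendsto (fun x => (gaussianReal 0 1).real (Iic x)) atBot (nhds 0) :=
  (tendsto_cdf_atBot (gaussianReal 0 1)).congr fun x => cdf_eq_real _ x

/-- Mills' ratio asymptotics for the lower Gaussian tail. -/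
lemma tendsto_gaussianReal_Iic_mills :
    Tendsto (fun x => (gaussianReal 0 1).real (Iic x) / (gaussianPDFReal 0 1 x / (-x)))
      atBot (nhds 1) := by
  have hpos : ∀ x, 0 < gaussianPDFReal 0 1 x := fun x => gaussianPDFReal_pos 0 1 x one_ne_zero
  have hinv : Tendsto (fun x : ℝ => (x ^ 2)⁻¹) atBot (nhds 0) :=
    tendsto_sq_atBot_atTop.inv_tendsto_atTop
  refine HasDerivAt.lhopital_zero_atBot (f' := gaussianPDFReal 0 1)
    (g' := fun x => gaussianPDFReal 0 1 x * (1 + (x ^ 2)⁻¹))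
    (Eventually.of_forall hasDerivAt_gaussianReal_Iic) ?_ ?_ ?_ ?_ ?_
  · filter_upwards [eventually_lt_atBot 0] with x hx
    have := (hasDerivAt_gaussianPDFReal_zero_one x).fun_div (hasDerivAt_neg x)
      (neg_ne_zero.2 hx.ne)
    refine this.congr_deriv ?_
    have := hx.ne
    field_simp
    ring
  · exact Eventually.of_forall fun x => (mul_pos (hpos x) (by positivity)).ne'
  · exact tendsto_gaussianReal_Iic_atBot
  · exact tendsto_gaussianPDFReal_atBot.div_atTop tendsto_neg_atBot_atTop
  · have : Tendsto (fun x : ℝ => (1 + (x ^ 2)⁻¹)⁻¹) atBot (nhds 1) := by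
      simpa using (hinv.const_add 1).inv₀ (by simp)
    refine this.congr fun x => ?_
    have := (hpos x).ne'
    have h1 : 1 + (x ^ 2)⁻¹ ≠ 0 := by positivity
    field_simp

/-- Ratio of Gaussian tails at two moving thresholds, reduced to the ratio of the leading terms. -/
lemma tendsto_gaussianReal_Iic_ratio {ι : Type*} {F : Filter ι} {u v : ι → ℝ} {c : ℝ}
    (hu : Tendsto u F atBot) (hv : Tendsto v F atBot)
    (hc : Tendsto (fun i => rexp (-(v i ^ 2 - u i ^ 2) / 2) * (u i / v i)) F (nhds c)) :
    Tendsto (fun i => (gaussianReal 0 1).real (Iic (v i)) / (gaussianReal 0 1).real (Iic (u i)))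
      F (nhds c) := by
  have hpos : ∀ x, 0 < gaussianPDFReal 0 1 x := fun x => gaussianPDFReal_pos 0 1 x one_ne_zero
  have h1 := tendsto_gaussianReal_Iic_mills.comp hu
  have h2 := tendsto_gaussianReal_Iic_mills.comp hv
  have h3 := (h2.div h1 one_ne_zero).mul hc
  rw [div_one, one_mul] at h3
  refine h3.congr' ?_
  filter_upwards [hu.eventually_lt_atBot 0, hv.eventually_lt_atBot 0] with i hui hvi
  have e : rexp (-(v i ^ 2 - u i ^ 2) / 2) =
      gaussianPDFReal 0 1 (v i) / gaussianPDFReal 0 1 (u i) := by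
    rw [gaussianPDFReal_zero_one, gaussianPDFReal_zero_one,
      mul_div_mul_left _ _ (by positivity), ← Real.exp_sub]
    congr 1; ring
  have a := (hpos (u i)).ne'
  have b := (hpos (v i)).ne'
  simp only [Pi.div_apply, Function.comp_apply, e]
  rcases eq_or_ne ((gaussianReal 0 1).real (Iic (u i))) 0 with h0 | h0
  · simp [h0]
  · field_simp [hui.ne, hvi.ne]

lemma tendsto_gaussianReal_Iic_ratio_of_sq_sub {ι : Type*} {F : Filter ι} {u v : ι → ℝ} {c : ℝ}
    (hu : Tendsto u F atBot) (hv : Tendsto v F atBot)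
    (hc : Tendsto (fun i => v i ^ 2 - u i ^ 2) F (nhds c)) :
    Tendsto (fun i => (gaussianReal 0 1).real (Iic (v i)) / (gaussianReal 0 1).real (Iic (u i)))
      F (nhds (rexp (-c / 2))) := by
  refine tendsto_gaussianReal_Iic_ratio hu hv ?_
  have h1 : Tendsto (fun i => u i / v i) F (nhds 1) := by
    have h2 : Tendsto (fun i => v i ^ 2) F atTop :=
      tendsto_sq_atBot_atTop.comp hv
    have h3 := (((hc.div_atTop h2).const_sub 1).sqrt)
    rw [sub_zero, Real.sqrt_one] at h3
    refine h3.congr' ?_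
    filter_upwards [hu.eventually_lt_atBot 0, hv.eventually_lt_atBot 0] with i hui hvi
    have : 1 - (v i ^ 2 - u i ^ 2) / v i ^ 2 = (u i / v i) ^ 2 := by
      field_simp [hvi.ne]; ring
    rw [this, Real.sqrt_sq (div_nonneg_of_nonpos hui.le hvi.le)]
  have h4 := ((hc.neg.div_const 2).rexp).mul h1
  simpa using h4

lemma tendsto_gaussianReal_Iic_mul_ratio {a : ℝ} (ha : 1 < a) :
    Tendsto (fun x => (gaussianReal 0 1).real (Iic (a * x)) / (gaussianReal 0 1).real (Iic x))
      atBot (nhds 0) := by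
  have h3 : Tendsto (fun x : ℝ => x ^ 2) atBot atTop :=
    tendsto_sq_atBot_atTop
  refine tendsto_gaussianReal_Iic_ratio (u := fun x => x) (v := fun x => a * x) tendsto_id
    (tendsto_id.const_mul_atBot (by linarith)) ?_
  have h4 : Tendsto (fun x : ℝ => -((a ^ 2 - 1) / 2 * x ^ 2)) atBot atBot :=
    tendsto_neg_atTop_atBot.comp (h3.const_mul_atTop (by nlinarith))
  have h5 := (tendsto_exp_atBot.comp h4).mul_const (1 / a)
  rw [zero_mul] at h5
  refine h5.congr' ?_
  filter_upwards [eventually_lt_atBot 0] with x hx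
  have : x ≠ 0 := hx.ne
  have : a ≠ 0 := by linarith
  simp only [Function.comp_apply]
  congr 1
  · congr 1; ring
  · field_simp

lemma exists_abs_sub_le_mul_abs_sq_sub {f : ℝ → ℝ} (hf : Differentiable ℝ f)
    (hf' : Tendsto (fun x => deriv f x / x) atBot (nhds 0)) {ε : ℝ} (hε : 0 < ε) :
    ∃ x₀ : ℝ, ∀ x ≤ x₀, ∀ z ≤ x₀, |f x - f z| ≤ ε * |x ^ 2 - z ^ 2| := by
  have h1 : ∀ᶠ x in atBot, |deriv f x / x| < ε := by
    simpa using (hf'.abs.eventually_lt_const (by simpa using hε))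
  obtain ⟨x₀, hx₀⟩ := eventually_atBot.1 (h1.and (eventually_lt_atBot 0))
  refine ⟨x₀, ?_⟩
  have key : ∀ x ≤ x₀, ∀ z ≤ x, |f x - f z| ≤ ε * |x ^ 2 - z ^ 2| := by
    intro x hx z hz
    have hx0 : x < 0 := (hx₀ x hx).2
    have hmv := Convex.norm_image_sub_le_of_norm_deriv_le (𝕜 := ℝ) (f := f) (s := Icc z x)
      (C := ε * (-z)) (x := z) (y := x) (fun t _ => hf t) (fun t ht => by
        obtain ⟨h2, h3⟩ := hx₀ t (ht.2.trans hx)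
        rw [abs_div, abs_of_neg h3, div_lt_iff₀ (by linarith)] at h2
        rw [Real.norm_eq_abs]
        nlinarith [ht.1]) (convex_Icc z x) (left_mem_Icc.2 hz) (right_mem_Icc.2 hz)
    rw [Real.norm_eq_abs, Real.norm_eq_abs, abs_of_nonneg (sub_nonneg.2 hz)] at hmv
    refine hmv.trans ?_
    rw [abs_of_nonpos (by nlinarith), mul_assoc]
    refine mul_le_mul_of_nonneg_left ?_ hε.le
    nlinarith
  intro x hx z hz
  rcases le_total z x with hzx | hxz
  · exact key x hx z hzx
  · rw [abs_sub_comm, abs_sub_comm (x ^ 2)]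
    exact key z hz x hxz

lemma tendsto_mul_sq_add_atBot_atTop {f : ℝ → ℝ} {b : ℝ} (hb : 0 < b) (hf : Differentiable ℝ f)
    (hf' : Tendsto (fun x => deriv f x / x) atBot (nhds 0)) :
    Tendsto (fun x => b * x ^ 2 + f x) atBot atTop := by
  obtain ⟨x₀, hx₀⟩ := exists_abs_sub_le_mul_abs_sq_sub hf hf' (half_pos hb)
  have h1 : Tendsto (fun x : ℝ => b / 2 * x ^ 2 + (f x₀ - b / 2 * x₀ ^ 2)) atBot atTop :=
    tendsto_atTop_add_const_right _ _ (tendsto_sq_atBot_atTop.const_mul_atTop (half_pos hb))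
  refine tendsto_atTop_mono' _ ?_ h1
  filter_upwards [eventually_le_atBot x₀] with x hx
  have h2 := neg_le_of_abs_le (hx₀ x hx x₀ le_rfl)
  have h3 : |x ^ 2 - x₀ ^ 2| ≤ x ^ 2 + x₀ ^ 2 := by
    rw [abs_le]; constructor <;> nlinarith [sq_nonneg x, sq_nonneg x₀]
  nlinarith [sq_nonneg x, sq_nonneg x₀]

lemma tendsto_sq_sub_of_tendsto_sub {ι : Type*} {F : Filter ι} {f : ℝ → ℝ} {b L : ℝ}
    (hb : 0 < b) (hf : Differentiable ℝ f)
    (hf' : Tendsto (fun x => deriv f x / x) atBot (nhds 0)) {u v : ι → ℝ}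
    (hu : Tendsto u F atBot) (hv : Tendsto v F atBot)
    (hL : Tendsto (fun i => (b * v i ^ 2 + f (v i)) - (b * u i ^ 2 + f (u i))) F (nhds L)) :
    Tendsto (fun i => v i ^ 2 - u i ^ 2) F (nhds (L / b)) := by
  have hlo : (fun i => f (v i) - f (u i)) =o[F] fun i => b * (v i ^ 2 - u i ^ 2) := by
    rw [Asymptotics.isLittleO_const_mul_right_iff hb.ne', Asymptotics.isLittleO_iff]
    intro c hc
    obtain ⟨x₀, hx₀⟩ := exists_abs_sub_le_mul_abs_sq_sub hf hf' hc
    filter_upwards [hu.eventually_le_atBot x₀, hv.eventually_le_atBot x₀] with i hui hvi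
    exact hx₀ _ hvi _ hui
  have heq := (Asymptotics.IsEquivalent.refl (u := fun i => b * (v i ^ 2 - u i ^ 2))
    (l := F)).add_isLittleO hlo
  have h1 : Tendsto (fun i => b * (v i ^ 2 - u i ^ 2)) F (nhds L) := by
    refine heq.tendsto_nhds (hL.congr fun i => ?_)
    simp only [Pi.add_apply]
    ring
  refine (h1.div_const b).congr fun i => ?_
  field_simp

/-- Under the left growth condition there is a threshold `w y → -∞` with
`{x | h (σ * x) ≤ -y} = {x | x ≤ w y}` whose square varies like `log y / (b * σ ^ 2)`. -/
lemma exists_threshold {σ b : ℝ} (hσ : 0 < σ) (hb : 0 < b) {h f r : ℝ → ℝ}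
    (hmono : StrictMono h) (hcont : Continuous h) (hf : Differentiable ℝ f)
    (hf' : Tendsto (fun x => deriv f x / x) atBot (nhds 0))
    (hr : Tendsto r atBot (nhds 0))
    (hrep : ∀ᶠ x in atBot, h x = -rexp (b * x ^ 2 + f x + r x)) :
    ∃ w : ℝ → ℝ, Tendsto w atTop atBot ∧ (∀ᶠ y in atTop, ∀ x, h (σ * x) ≤ -y ↔ x ≤ w y) ∧
      ∀ l : ℝ, 0 < l → Tendsto (fun y => w (l * y) ^ 2 - w y ^ 2) atTop
        (nhds (Real.log l / (b * σ ^ 2))) := by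
  have hbot : Tendsto h atBot atBot := by
    have h1 := (tendsto_mul_sq_add_atBot_atTop hb hf hf').atTop_add hr
    exact (tendsto_neg_atTop_atBot.comp (tendsto_exp_atTop.comp h1)).congr'
      (hrep.mono fun x hx => hx.symm)
  have hex : ∀ y : ℝ, ∃ z, -h 0 ≤ y → h z = -y := by
    intro y
    by_cases hy : -h 0 ≤ y
    · obtain ⟨z, hz⟩ := (hbot.eventually_le_atBot (-y)).exists
      obtain ⟨t, ht⟩ := mem_range_of_exists_le_of_exists_ge hcont ⟨z, hz⟩ ⟨0, by linarith⟩
      exact ⟨t, fun _ => ht⟩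
    · exact ⟨0, fun h' => absurd h' hy⟩
  choose W hW using hex
  have hWev : ∀ᶠ y in atTop, h (W y) = -y := (eventually_ge_atTop (-h 0)).mono hW
  have hWbot : Tendsto W atTop atBot := by
    refine tendsto_atBot.2 fun M => ?_
    filter_upwards [hWev, eventually_ge_atTop (-h M)] with y hy hM
    exact hmono.le_iff_le.1 (by linarith)
  have hlog : ∀ᶠ y in atTop, b * W y ^ 2 + f (W y) + r (W y) = Real.log y := by
    filter_upwards [hWev, hWbot.eventually hrep] with y hy hy'
    rw [← Real.log_exp (b * W y ^ 2 + f (W y) + r (W y))]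
    congr 1; linarith
  refine ⟨fun y => W y / σ, hWbot.atBot_div_const hσ, ?_, fun l hl => ?_⟩
  · filter_upwards [hWev] with y hy x
    rw [← hy, hmono.le_iff_le, le_div_iff₀ hσ, mul_comm]
  · have hly : Tendsto (fun y : ℝ => l * y) atTop atTop := tendsto_id.const_mul_atTop hl
    have h1 : Tendsto (fun y => Real.log l - r (W (l * y)) + r (W y)) atTop
        (nhds (Real.log l)) := by
      simpa using ((hr.comp (hWbot.comp hly)).const_sub (Real.log l)).add (hr.comp hWbot)
    have h2 := tendsto_sq_sub_of_tendsto_sub hb hf hf' hWbot (hWbot.comp hly) (h1.congr' (by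
      filter_upwards [hlog, hly.eventually hlog, eventually_gt_atTop 0] with y h3 h4 h5
      rw [Real.log_mul hl.ne' h5.ne'] at h4
      simp only [Function.comp_apply]
      linarith))
    have h6 := h2.div_const (σ ^ 2)
    rw [div_div] at h6
    refine h6.congr fun y => ?_
    simp only [Function.comp_apply]
    ring

/-- Asymptotic independence of the lower tails of a non-degenerate Gaussian pair. -/
lemma tendsto_joint_lower_tail_ratio {Ω : Type*} [MeasurableSpace Ω] {μ : Measure Ω}
    [IsProbabilityMeasure μ] {ρ s : ℝ} (hρ : ρ ∈ Ioo (0 : ℝ) 1) (hs : 0 < s)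
    {Z₁ Z₂ : Ω → ℝ} (hZ₁meas : Measurable Z₁) (hZ₂meas : Measurable Z₂)
    (hZ₁law : μ.map Z₁ = gaussianReal 0 1) (hZ₂law : μ.map Z₂ = gaussianReal 0 1)
    (hindep : IndepFun Z₁ Z₂ μ) :
    Tendsto (fun x => μ.real {ω | Z₁ ω ≤ x ∧ ρ * Z₁ ω + s * Z₂ ω ≤ x} /
      (gaussianReal 0 1).real (Iic x)) atBot (nhds 0) := by
  obtain ⟨hρ0, hρ1⟩ := hρ
  obtain ⟨a, ha1, ha⟩ : ∃ a : ℝ, 1 < a ∧ ρ * a < 1 := by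
    obtain ⟨a, h1, h2⟩ := exists_between ((one_lt_inv₀ hρ0).2 hρ1)
    refine ⟨a, h1, ?_⟩
    rwa [← one_div, lt_div_iff₀ hρ0, mul_comm] at h2
  have hκ : 0 < (1 - ρ * a) / s := div_pos (by linarith) hs
  have hlaw1 : ∀ x, μ.real (Z₁ ⁻¹' Iic x) = (gaussianReal 0 1).real (Iic x) := fun x => by
    rw [← hZ₁law, map_measureReal_apply hZ₁meas measurableSet_Iic]
  have hlaw2 : ∀ x, μ.real (Z₂ ⁻¹' Iic x) = (gaussianReal 0 1).real (Iic x) := fun x => by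
    rw [← hZ₂law, map_measureReal_apply hZ₂meas measurableSet_Iic]
  have hlim := (tendsto_gaussianReal_Iic_mul_ratio ha1).add
    (tendsto_gaussianReal_Iic_atBot.comp (tendsto_id.const_mul_atBot hκ))
  rw [add_zero] at hlim
  refine squeeze_zero (fun x => by positivity) (fun x => ?_) hlim
  have hsub : {ω | Z₁ ω ≤ x ∧ ρ * Z₁ ω + s * Z₂ ω ≤ x} ⊆
      Z₁ ⁻¹' Iic (a * x) ∪ (Z₁ ⁻¹' Iic x ∩ Z₂ ⁻¹' Iic ((1 - ρ * a) / s * x)) := by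
    rintro ω ⟨h1, h2⟩
    rcases le_or_gt (Z₁ ω) (a * x) with h3 | h3
    · exact Or.inl h3
    · refine Or.inr ⟨h1, ?_⟩
      rw [mem_preimage, mem_Iic, div_mul_eq_mul_div, le_div_iff₀ hs]
      nlinarith
  have hprod : μ.real (Z₁ ⁻¹' Iic x ∩ Z₂ ⁻¹' Iic ((1 - ρ * a) / s * x)) =
      (gaussianReal 0 1).real (Iic x) * (gaussianReal 0 1).real (Iic ((1 - ρ * a) / s * x)) := by
    rw [← hlaw1, ← hlaw2, measureReal_def, measureReal_def, measureReal_def,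
      hindep.measure_inter_preimage_eq_mul _ _ measurableSet_Iic measurableSet_Iic,
      ENNReal.toReal_mul]
  have hle : μ.real {ω | Z₁ ω ≤ x ∧ ρ * Z₁ ω + s * Z₂ ω ≤ x} ≤
      (gaussianReal 0 1).real (Iic (a * x)) +
      (gaussianReal 0 1).real (Iic x) * (gaussianReal 0 1).real (Iic ((1 - ρ * a) / s * x)) := by
    rw [← hprod, ← hlaw1 (a * x)]
    exact (measureReal_mono hsub).trans (measureReal_union_le _ _)
  refine (div_le_div_of_nonneg_right hle measureReal_nonneg).trans ?_
  rw [add_div]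
  simp only [Function.comp_apply, id_eq]
  gcongr
  exact div_le_of_le_mul₀ measureReal_nonneg measureReal_nonneg (mul_comm _ _).le

/-- If `F` is regularly varying of negative index, and `T` is sandwiched between dilations of `F`
up to terms negligible with respect to `F`, then `T` is asymptotic to `F`. -/
lemma tendsto_div_one_of_regularly_varying {F T J : ℝ → ℝ} {β : ℝ} (hβ : 0 < β)
    (hFnonneg : ∀ y, 0 ≤ F y)
    (hF : ∀ l : ℝ, 0 < l → Tendsto (fun y => F (l * y) / F y) atTop (nhds (l ^ (-β))))
    (hJ : Tendsto (fun y => J y / F y) atTop (nhds 0))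
    (hup : ∀ ε : ℝ, 0 < ε → ε < 1 → ∀ K : ℝ, 0 < K →
      ∀ᶠ y in atTop, T y ≤ F ((1 - ε) * y) + F (K * y))
    (hlow : ∀ ε : ℝ, 0 < ε → ∀ᶠ y in atTop, F ((1 + ε) * y) - J (ε * y) ≤ T y) :
    Tendsto (fun y => T y / F y) atTop (nhds 1) := by
  have hFpos : ∀ᶠ y in atTop, 0 < F y := by
    filter_upwards [(hF 2 two_pos).eventually_const_lt (rpow_pos_of_pos two_pos _)] with y hy
    refine (hFnonneg y).lt_of_ne' fun h0 => ?_
    simp [h0] at hy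
  have hcont : ∀ c : ℝ, ContinuousAt (fun ε : ℝ => (1 + c * ε) ^ (-β)) 0 := fun c =>
    ContinuousAt.rpow_const (by fun_prop) (Or.inl (by simp))
  have hone : ∀ c : ℝ, Tendsto (fun ε : ℝ => (1 + c * ε) ^ (-β)) (nhdsWithin 0 (Ioi 0))
      (nhds 1) := fun c => by
    simpa [ContinuousAt] using (hcont c).tendsto.mono_left nhdsWithin_le_nhds
  rw [tendsto_order]
  constructor
  · intro a ha
    obtain ⟨ε, hεa, hε⟩ := (((hone 1).eventually_const_lt ha).and self_mem_nhdsWithin).exists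
    rw [one_mul] at hεa
    have hεy : Tendsto (fun y : ℝ => ε * y) atTop atTop := tendsto_id.const_mul_atTop hε
    have h1 := (hF (1 + ε) (by linarith)).sub ((hJ.comp hεy).mul (hF ε hε))
    rw [zero_mul, sub_zero] at h1
    filter_upwards [h1.eventually_const_lt hεa, hlow ε hε, hFpos, hεy.eventually hFpos]
      with y h2 h3 h4 h5
    refine h2.trans_le ?_
    simp only [Function.comp_apply]
    rw [div_mul_div_cancel₀ h5.ne', ← sub_div]
    gcongr
  · intro c hc
    have hlt1 : ∀ᶠ ε : ℝ in nhdsWithin 0 (Ioi 0), ε < 1 :=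
      nhdsWithin_le_nhds (eventually_lt_nhds one_pos)
    obtain ⟨ε, ⟨hεc, hε1⟩, hε⟩ := ((((hone (-1)).eventually_lt_const hc).and hlt1).and
      self_mem_nhdsWithin).exists
    rw [neg_one_mul, ← sub_eq_add_neg] at hεc
    obtain ⟨K, hKc, hK⟩ := (((tendsto_rpow_neg_atTop hβ).eventually_lt_const
      (sub_pos.2 hεc)).and (eventually_gt_atTop 0)).exists
    have h1 := (hF (1 - ε) (by linarith)).add (hF K hK)
    filter_upwards [h1.eventually_lt_const (show _ < c by linarith), hup ε hε hε1 K hK, hFpos]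
      with y h2 h3 h4
    refine lt_of_le_of_lt ?_ h2
    rw [← add_div]
    gcongr

lemma map_linear_combination_eq_gaussianReal {Ω : Type*} [MeasurableSpace Ω] {μ : Measure Ω}
    {ρ : ℝ} (hρ : ρ ∈ Ioo (0 : ℝ) 1) {Z₁ Z₂ : Ω → ℝ}
    (hZ₁meas : Measurable Z₁) (hZ₂meas : Measurable Z₂)
    (hZ₁law : μ.map Z₁ = gaussianReal 0 1) (hZ₂law : μ.map Z₂ = gaussianReal 0 1)
    (hindep : IndepFun Z₁ Z₂ μ) :
    μ.map (fun ω => ρ * Z₁ ω + √(1 - ρ ^ 2) * Z₂ ω) = gaussianReal 0 1 := by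
  have h1 := (gaussianReal_const_mul ⟨hZ₁meas.aemeasurable, hZ₁law⟩ ρ).map_eq
  have h2 := (gaussianReal_const_mul ⟨hZ₂meas.aemeasurable, hZ₂law⟩ √(1 - ρ ^ 2)).map_eq
  have h3 := gaussianReal_add_gaussianReal_of_indepFun (hindep.comp (measurable_const_mul ρ)
    (measurable_const_mul √(1 - ρ ^ 2))) h1 h2
  refine h3.trans ?_
  congr 1
  · simp
  · have h4 : 0 ≤ 1 - ρ ^ 2 := by nlinarith [hρ.1, hρ.2]
    ext
    simp [Real.sq_sqrt h4]

/-- A function negligible with respect to its reflection has a Gaussian right tail dominated by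
its left tail at any multiple of the level. -/
lemma eventually_upper_tail_le {σ : ℝ} {h : ℝ → ℝ} (hmono : StrictMono h)
    (hneg : ∀ᶠ x in atBot, h x < 0)
    (hsmall : Tendsto (fun x => h x / h (-x)) atTop (nhds 0)) {ε K : ℝ} (hε : 0 < ε)
    (hK : 0 < K) :
    ∀ᶠ y in atTop, (gaussianReal 0 1).real {x | ε * y < h (σ * x)} ≤
      (gaussianReal 0 1).real {x | h (σ * x) ≤ -(K * y)} := by
  have h1 : ∀ᶠ x in atTop, |h x / h (-x)| < ε / K := by
    simpa using hsmall.abs.eventually_lt_const (by simpa using div_pos hε hK)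
  obtain ⟨x₀, hx₀⟩ := eventually_atTop.1 (h1.and (tendsto_neg_atTop_atBot.eventually hneg))
  filter_upwards [eventually_ge_atTop (h x₀ / ε)] with y hy
  rw [div_le_iff₀ hε] at hy
  have hsymm : (gaussianReal 0 1).real {x | ε * y < h (σ * x)} =
      (gaussianReal 0 1).real {x | ε * y < h (σ * -x)} := by
    have hm : MeasurableSet {x : ℝ | ε * y < h (σ * x)} :=
      measurableSet_lt measurable_const (hmono.monotone.measurable.comp (measurable_const_mul σ))
    have hmap := gaussianReal_map_neg (μ := 0) (v := 1)
    rw [neg_zero] at hmap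
    conv_lhs => rw [← hmap, map_measureReal_apply measurable_neg hm]
    rfl
  rw [hsymm]
  refine measureReal_mono fun x hx => ?_
  rw [mem_ofPred_eq, mul_neg] at hx
  have hlt : x₀ < -(σ * x) := hmono.lt_iff_lt.1 (by linarith)
  obtain ⟨h2, h3⟩ := hx₀ _ hlt.le
  rw [neg_neg] at h2 h3
  rw [abs_div, abs_of_neg h3, div_lt_div_iff₀ (by linarith) hK] at h2
  have h4 := le_abs_self (h (-(σ * x)))
  rw [mem_ofPred_eq]
  have h5 : ε * (K * y) < ε * (-h (σ * x)) := by nlinarith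
  linarith [lt_of_mul_lt_mul_left h5 hε.le]

/-- For a centred bivariate Gaussian pair `(X_s, X_t)` with common
variance `σ²` and correlation `ρ ∈ (0,1)` (built from independent standard Gaussians
`Z₁, Z₂`), if `h` is strictly increasing, continuous, satisfies [A₋] with parameter
`b > 0` and `h(x)/h(-x) → 0` as `x → ∞`, then
`P(h(X_t) - h(X_s) > y) / P(h(X_t) ≤ -y) → 1`; in particular the right tail of the
increment is regularly varying with the same index `-β₋ = -1/(2bσ²)` as the left tail
of the distribution of `h(X_t)`. -/
theorem increment_right_tail_asymptotics_left_condition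
    {Ω : Type*} [MeasurableSpace Ω] (μ : Measure Ω) [IsProbabilityMeasure μ]
    (σ ρ : ℝ) (hσ : 0 < σ) (hρ : ρ ∈ Set.Ioo (0 : ℝ) 1)
    (Z₁ Z₂ : Ω → ℝ) (hZ₁meas : Measurable Z₁) (hZ₂meas : Measurable Z₂)
    (hZ₁law : μ.map Z₁ = gaussianReal 0 1) (hZ₂law : μ.map Z₂ = gaussianReal 0 1)
    (hindep : IndepFun Z₁ Z₂ μ)
    (Xs Xt : Ω → ℝ)
    (hXs : Xs = fun ω => σ * Z₁ ω)
    (hXt : Xt = fun ω => σ * (ρ * Z₁ ω + Real.sqrt (1 - ρ ^ 2) * Z₂ ω))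
    (h : ℝ → ℝ) (hmono : StrictMono h) (hcont : Continuous h)
    (b : ℝ) (hb : 0 < b)
    (f r : ℝ → ℝ)
    (hf : Differentiable ℝ f)
    (hf' : Tendsto (fun x => deriv f x / x) atBot (nhds 0))
    (hr : Tendsto r atBot (nhds 0))
    (hrep : ∀ᶠ x in atBot, h x = -Real.exp (b * x ^ 2 + f x + r x))
    (hsmall : Tendsto (fun x => h x / h (-x)) atTop (nhds 0)) :
    Tendsto
      (fun y => (μ {ω | h (Xt ω) - h (Xs ω) > y}).toReal / (μ {ω | h (Xt ω) ≤ -y}).toReal)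
      atTop (nhds 1) ∧
    ∀ l : ℝ, 0 < l →
      Tendsto
        (fun y =>
          (μ {ω | h (Xt ω) - h (Xs ω) > l * y}).toReal /
            (μ {ω | h (Xt ω) - h (Xs ω) > y}).toReal)
        atTop (nhds (l ^ (-(1 / (2 * b * σ ^ 2))))) := by
  subst hXs hXt
  set S : Ω → ℝ := fun ω => ρ * Z₁ ω + √(1 - ρ ^ 2) * Z₂ ω
  have hSmeas : Measurable S := (hZ₁meas.const_mul ρ).add (hZ₂meas.const_mul _)
  have hSlaw : μ.map S = gaussianReal 0 1 :=
    map_linear_combination_eq_gaussianReal hρ hZ₁meas hZ₂meas hZ₁law hZ₂law hindep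
  have hs : 0 < √(1 - ρ ^ 2) := Real.sqrt_pos.2 (by nlinarith [hρ.1, hρ.2])
  have hβ : 0 < 1 / (2 * b * σ ^ 2) := by positivity
  have hσmeas : Measurable fun x => h (σ * x) :=
    hcont.measurable.comp (measurable_const_mul σ)
  have htransfer : ∀ {U : Ω → ℝ}, Measurable U → μ.map U = gaussianReal 0 1 →
      ∀ {A : Set ℝ}, MeasurableSet A → μ.real (U ⁻¹' A) = (gaussianReal 0 1).real A := by
    intro U hU hUlaw A hA
    rw [← hUlaw, map_measureReal_apply hU hA]
  set F : ℝ → ℝ := fun y => (gaussianReal 0 1).real {x | h (σ * x) ≤ -y}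
  set T : ℝ → ℝ := fun y => μ.real {ω | h (σ * S ω) - h (σ * Z₁ ω) > y}
  set J : ℝ → ℝ := fun y => μ.real {ω | h (σ * Z₁ ω) ≤ -y ∧ h (σ * S ω) ≤ -y}
  have hmeasle : ∀ y, MeasurableSet {x | h (σ * x) ≤ -y} := fun y =>
    measurableSet_le hσmeas measurable_const
  have hZF : ∀ y, μ.real {ω | h (σ * Z₁ ω) ≤ -y} = F y := fun y =>
    htransfer hZ₁meas hZ₁law (hmeasle y)
  have hSF : ∀ y, μ.real {ω | h (σ * S ω) ≤ -y} = F y := fun y =>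
    htransfer hSmeas hSlaw (hmeasle y)
  obtain ⟨w, hwbot, hwiff, hwsq⟩ := exists_threshold hσ hb hmono hcont hf hf' hr hrep
  have hFw : ∀ᶠ y in atTop, (gaussianReal 0 1).real (Iic (w y)) = F y := by
    filter_upwards [hwiff] with y hy
    exact congrArg _ (Set.ext fun x => (hy x).symm)
  have hF : ∀ l : ℝ, 0 < l →
      Tendsto (fun y => F (l * y) / F y) atTop (nhds (l ^ (-(1 / (2 * b * σ ^ 2))))) := by
    intro l hl
    have hly : Tendsto (fun y : ℝ => l * y) atTop atTop := tendsto_id.const_mul_atTop hl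
    have h1 := tendsto_gaussianReal_Iic_ratio_of_sq_sub hwbot (hwbot.comp hly) (hwsq l hl)
    have h2 : rexp (-(Real.log l / (b * σ ^ 2)) / 2) = l ^ (-(1 / (2 * b * σ ^ 2))) := by
      rw [Real.rpow_def_of_pos hl]
      congr 1
      field_simp
    rw [h2] at h1
    refine h1.congr' ?_
    filter_upwards [hFw, hly.eventually hFw] with y h3 h4
    rw [Function.comp_apply, h3, h4]
  have hJ : Tendsto (fun y => J y / F y) atTop (nhds 0) := by
    refine ((tendsto_joint_lower_tail_ratio hρ hs hZ₁meas hZ₂meas hZ₁law hZ₂law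
      hindep).comp hwbot).congr' ?_
    filter_upwards [hFw, hwiff] with y h1 h2
    rw [Function.comp_apply, h1]
    congr 2
    ext ω
    exact and_congr (h2 _).symm (h2 _).symm
  have hneg : ∀ᶠ x in atBot, h x < 0 := hrep.mono fun x hx => by
    rw [hx]; exact neg_neg_of_pos (Real.exp_pos _)
  have hup : ∀ ε : ℝ, 0 < ε → ε < 1 → ∀ K : ℝ, 0 < K →
      ∀ᶠ y in atTop, T y ≤ F ((1 - ε) * y) + F (K * y) := by
    intro ε hε _ K hK
    filter_upwards [eventually_upper_tail_le (σ := σ) hmono hneg hsmall hε hK] with y hy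
    have h1 : μ.real {ω | ε * y < h (σ * S ω)} ≤ F (K * y) :=
      (htransfer hSmeas hSlaw (measurableSet_lt measurable_const hσmeas)).trans_le hy
    rw [← hZF]
    refine le_trans ?_ (add_le_add_right h1 _)
    refine (measureReal_mono fun ω hω => ?_).trans (measureReal_union_le _ _)
    by_contra hcon
    simp only [mem_union, mem_ofPred_eq, not_or, not_le, not_lt] at hcon hω
    linarith
  have hlow : ∀ ε : ℝ, 0 < ε → ∀ᶠ y in atTop, F ((1 + ε) * y) - J (ε * y) ≤ T y := by
    intro ε hε
    filter_upwards [eventually_ge_atTop 0] with y hy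
    rw [← hZF, sub_le_iff_le_add]
    refine (measureReal_mono fun ω hω => ?_).trans (measureReal_union_le _ _)
    by_contra hcon
    simp only [mem_union, mem_ofPred_eq, not_or, not_and, not_le, not_lt] at hcon hω
    have := hcon.2 (by linarith)
    linarith [hcon.1]
  have hmain : Tendsto (fun y => T y / F y) atTop (nhds 1) :=
    tendsto_div_one_of_regularly_varying hβ (fun y => measureReal_nonneg) hF hJ hup hlow
  refine ⟨hmain.congr fun y => by rw [← hSF]; rfl, fun l hl => ?_⟩
  have hly : Tendsto (fun y : ℝ => l * y) atTop atTop := tendsto_id.const_mul_atTop hl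
  have h1 := ((hmain.comp hly).mul (hF l hl)).div hmain one_ne_zero
  rw [one_mul, div_one] at h1
  refine h1.congr' ?_
  have hne : ∀ᶠ y in atTop, F y ≠ 0 :=
    (hmain.eventually_ne one_ne_zero).mono fun y hy h0 => hy (by rw [h0, div_zero])
  filter_upwards [hne, hly.eventually hne] with y h2 h3
  change T (l * y) / F (l * y) * (F (l * y) / F y) / (T y / F y) = T (l * y) / T y
  rw [div_mul_div_cancel₀ h3, div_div_div_cancel_right₀ h2]
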